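/- (Martingale Lemma 2.) Let $B \in \mathbb{N}$, $\theta \in (0,1]$, $a \ge 0$, $l \ge 1$, $\mu \in (0,1)$, $\eta \ge 0$, and put $b_k := (k+a)^{-\theta}$ (only indices $k \ge 1$ are used below). For a real sequence $(v_k)_{k \ge 0}$ and $k \in \mathbb{N}$ let $\max_{k-B \le \hat k \le k} v_{\hat k}$ be the maximum of $v$ over the integers $\hat k$ with $\max(k-B,0) \le \hat k \le k$. Let $(v_k)$ be a sequence of nonnegative reals, let $a_1 \ge 0$ with $a_1 \le 1-\mu$, let $(a_{2,k})$ be a nonincreasing sequence of nonnegative reals with $a_1 + a_{2,k} \le 1$ for every $k$, and let $(a_{3,k})$ be nonnegative reals with $a_{3,k} \le \frac{b_{k+1}}{l}\,\eta$ for every $k$. Let $k^* \in \mathbb{N}$ and suppose $$v_{k+1} \le a_1 v_k + a_{2,k} \max_{k-B \le \hat k \le k} v_{\hat k} + a_{3,k} \qquad \text{for all } k \ge k^*.$$ Let $\bar k \in \mathbb{N}$ satisfy $\bar k \ge k^*$, $\bar k \ge B$, $0 < a_1 + a_{2,\bar k}$ and $a_{2,\bar k} \le \frac{1-\frac1l}{(B+2)^{\theta}}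 + \mu - 1$. Set $\rho := (a_1 + a_{2,\bar k})^{1/(B+1)}$, and let $V_0$ be any real number with $V_0 \ge \rho^{-\bar k} \max_{\bar k - B \le j \le \bar k} v_j$ (for example $V_0 = \rho^{-(\bar k + B)} \max_{\bar k - B \le j \le \bar k} v_j$). Then $$v_{\bar k + m} \le \rho^{\bar k + B + 1} V_0 + b_{\bar k + m}\,\eta \qquad \text{for every } 1 \le m \le B+1,$$ and $$v_k \le \rho^{k} V_0 + b_k\,\eta \qquad \text{for every } k \ge \bar k + B + 1.$$ -/

import Mathlib

/-- The maximum of a real sequence over the delay window `max (k - B) 0 ≤ j ≤ k`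
(natural-number subtraction truncates at `0`). -/
noncomputable def windowMax (B : ℕ) (v : ℕ → ℝ) (k : ℕ) : ℝ :=
  (Finset.Icc (k - B) k).sup' (Finset.nonempty_Icc.mpr (Nat.sub_le k B)) v

/-- Every value in the delay window is bounded by the window maximum. -/
theorem le_windowMax {B : ℕ} {v : ℕ → ℝ} {j k : ℕ} (h₁ : k - B ≤ j) (h₂ : j ≤ k) :
    v j ≤ windowMax B v k :=
  Finset.le_sup' v (Finset.mem_Icc.mpr ⟨h₁, h₂⟩)

/-- A uniform bound on the delay window bounds the window maximum. -/
theorem windowMax_le {B : ℕ} {v : ℕ → ℝ} {k : ℕ} {C : ℝ}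
    (h : ∀ j, k - B ≤ j → j ≤ k → v j ≤ C) : windowMax B v k ≤ C :=
  Finset.sup'_le _ _ fun j hj => h j (Finset.mem_Icc.mp hj).1 (Finset.mem_Icc.mp hj).2

/-- Over at most `B + 1` steps the stepsize `(k + a) ^ (-θ)` shrinks by at most the factor
`(B + 2) ^ θ`. -/
theorem rpow_neg_le_mul_rpow_neg {B n p : ℕ} {θ a : ℝ} (hθ : 0 ≤ θ) (ha : 0 ≤ a)
    (hn : 1 ≤ n) (hp : 1 ≤ p) (hpn : p ≤ n + B + 1) :
    ((n : ℝ) + a) ^ (-θ) ≤ ((B : ℝ) + 2) ^ θ * ((p : ℝ) + a) ^ (-θ) := by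
  have hn' : (1 : ℝ) ≤ n := by exact_mod_cast hn
  have hp' : (1 : ℝ) ≤ p := by exact_mod_cast hp
  have hpn' : (p : ℝ) ≤ n + B + 1 := by exact_mod_cast hpn
  have hB : (0 : ℝ) ≤ B := B.cast_nonneg
  have hna : 0 < (n : ℝ) + a := by linarith
  have hpa : 0 < (p : ℝ) + a := by linarith
  have key : (p : ℝ) + a ≤ ((B : ℝ) + 2) * (n + a) := by
    nlinarith [mul_nonneg hB ha, mul_nonneg hB (sub_nonneg.mpr hn')]
  have hpow := Real.rpow_le_rpow hpa.le key hθ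
  rw [Real.mul_rpow (by linarith) hna.le] at hpow
  rw [Real.rpow_neg hna.le, Real.rpow_neg hpa.le, ← div_eq_mul_inv, inv_eq_one_div,
    div_le_div_iff₀ (Real.rpow_pos_of_pos hna _) (Real.rpow_pos_of_pos hpa _)]
  linarith

/-- A nonnegative sequence satisfying the perturbed delayed contraction
`v (k+1) ≤ a₁ v k + a₂ k · max_{k-B ≤ j ≤ k} v j + a₃ k`, with perturbations dominated by the
diminishing stepsizes `b k = (k+a)^(-θ)`, decays geometrically up to a vanishing term
proportional to the stepsize. -/
theorem martingale_lemma_two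
    (B : ℕ) (θ a l μ η : ℝ)
    (hθ₀ : 0 < θ) (hθ₁ : θ ≤ 1) (ha : 0 ≤ a) (hl : 1 ≤ l)
    (hμ₀ : 0 < μ) (hμ₁ : μ < 1) (hη : 0 ≤ η)
    (b : ℕ → ℝ) (hb : ∀ k, b k = ((k : ℝ) + a) ^ (-θ))
    (v : ℕ → ℝ) (hv : ∀ k, 0 ≤ v k)
    (a₁ : ℝ) (ha₁ : 0 ≤ a₁) (ha₁μ : a₁ ≤ 1 - μ)
    (a₂ : ℕ → ℝ) (ha₂ : ∀ k, 0 ≤ a₂ k) (ha₂anti : Antitone a₂)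
    (hsum : ∀ k, a₁ + a₂ k ≤ 1)
    (a₃ : ℕ → ℝ) (ha₃ : ∀ k, 0 ≤ a₃ k) (ha₃b : ∀ k, a₃ k ≤ b (k + 1) / l * η)
    (kstar : ℕ)
    (hrec : ∀ k, kstar ≤ k → v (k + 1) ≤ a₁ * v k + a₂ k * windowMax B v k + a₃ k)
    (kbar : ℕ) (hkbar₁ : kstar ≤ kbar) (hkbar₂ : B ≤ kbar)
    (hpos : 0 < a₁ + a₂ kbar)
    (ha₂kbar : a₂ kbar ≤ (1 - 1 / l) / ((B : ℝ) + 2) ^ θ + μ - 1)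
    (ρ : ℝ) (hρ : ρ = (a₁ + a₂ kbar) ^ ((1 : ℝ) / ((B : ℝ) + 1)))
    (V₀ : ℝ) (hV₀ : windowMax B v kbar / ρ ^ kbar ≤ V₀) :
    (∀ m, 1 ≤ m → m ≤ B + 1 →
      v (kbar + m) ≤ ρ ^ (kbar + B + 1) * V₀ + b (kbar + m) * η) ∧
    (∀ k, kbar + B + 1 ≤ k → v k ≤ ρ ^ k * V₀ + b k * η) := by
  set c := a₁ + a₂ kbar with hc
  have hρpos : 0 < ρ := hρ ▸ Real.rpow_pos_of_pos hpos _
  have hρ1 : ρ ≤ 1 := hρ ▸ Real.rpow_le_one hpos.le (hsum kbar) (by positivity)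
  have hρc : ρ ^ (B + 1) = c := by
    rw [hρ, ← Real.rpow_natCast, ← Real.rpow_mul hpos.le]
    push_cast
    rw [one_div_mul_cancel (by positivity), Real.rpow_one]
  have hM : windowMax B v kbar ≤ ρ ^ kbar * V₀ := by
    rw [div_le_iff₀ (by positivity)] at hV₀
    linarith
  have hV₀nn : 0 ≤ V₀ :=
    (div_nonneg ((hv kbar).trans (le_windowMax (Nat.sub_le _ _) le_rfl)) (by positivity)).trans hV₀
  have hbnn : ∀ k, 0 ≤ b k := fun k => by rw [hb]; positivity
  have hbanti : ∀ n k, 1 ≤ n → n ≤ k → b k ≤ b n := fun n k hn hnk => by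
    have hn' : (1 : ℝ) ≤ n := by exact_mod_cast hn
    have hnk' : (n : ℝ) ≤ k := by exact_mod_cast hnk
    rw [hb, hb]
    exact Real.rpow_le_rpow_of_nonpos (by linarith) (by linarith) (by linarith)
  have hcb : ∀ n p, 1 ≤ n → 1 ≤ p → p ≤ n + B + 1 → c * b n ≤ (1 - 1 / l) * b p := by
    intro n p hn hp hpn
    have hq : 0 < ((B : ℝ) + 2) ^ θ := by positivity
    have hcq : c * ((B : ℝ) + 2) ^ θ ≤ 1 - 1 / l := by
      rw [← le_div_iff₀ hq]
      linarith
    have hbn : b n ≤ ((B : ℝ) + 2) ^ θ * b p := by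
      rw [hb, hb]
      exact rpow_neg_le_mul_rpow_neg hθ₀.le ha hn hp hpn
    calc c * b n ≤ c * (((B : ℝ) + 2) ^ θ * b p) := mul_le_mul_of_nonneg_left hbn hpos.le
      _ = c * ((B : ℝ) + 2) ^ θ * b p := by ring
      _ ≤ _ := mul_le_mul_of_nonneg_right hcq (hbnn p)
  have main : ∀ k, kbar < k → v k ≤ ρ ^ max k (kbar + B + 1) * V₀ + b k * η := by
    intro k
    induction k using Nat.strong_induction_on with
    | _ p ih =>
      intro hp
      obtain ⟨k, rfl⟩ : ∃ k, p = k + 1 := ⟨p - 1, by omega⟩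
      have hk : kbar ≤ k := by omega
      have hW : windowMax B v k ≤
          ρ ^ max (k - B) kbar * V₀ + b (max (k - B) (kbar + 1)) * η := by
        refine windowMax_le fun j hj₁ hj₂ => ?_
        rcases le_or_gt j kbar with hj | hj
        · rw [max_eq_right (hj₁.trans hj)]
          have := (le_windowMax (v := v) (by omega : kbar - B ≤ j) hj).trans hM
          have := mul_nonneg (hbnn (max (k - B) (kbar + 1))) hη
          linarith
        · refine (ih j (by omega) hj).trans (add_le_add ?_ ?_)
          · exact mul_le_mul_of_nonneg_right
              (pow_le_pow_of_le_one hρpos.le hρ1 (by omega)) hV₀nn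
          · exact mul_le_mul_of_nonneg_right (hbanti _ _ (by omega) (by omega)) hη
      have hvW : v k ≤ windowMax B v k := le_windowMax (Nat.sub_le _ _) le_rfl
      have hW₀ : 0 ≤ windowMax B v k := (hv k).trans hvW
      have hexp : max (k + 1) (kbar + B + 1) = (B + 1) + max (k - B) kbar := by omega
      have hstep := hcb (max (k - B) (kbar + 1)) (k + 1) (by omega) (by omega) (by omega)
      calc v (k + 1) ≤ a₁ * v k + a₂ k * windowMax B v k + a₃ k := hrec k (hkbar₁.trans hk)
        _ ≤ a₁ * windowMax B v k + a₂ kbar * windowMax B v k + b (k + 1) / l * η :=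
            add_le_add (add_le_add (mul_le_mul_of_nonneg_left hvW ha₁)
              (mul_le_mul_of_nonneg_right (ha₂anti hk) hW₀)) (ha₃b k)
        _ = c * windowMax B v k + b (k + 1) / l * η := by rw [hc]; ring
        _ ≤ c * (ρ ^ max (k - B) kbar * V₀ + b (max (k - B) (kbar + 1)) * η)
              + b (k + 1) / l * η := by gcongr
        _ = ρ ^ max (k + 1) (kbar + B + 1) * V₀
              + c * b (max (k - B) (kbar + 1)) * η + b (k + 1) / l * η := by
            rw [hexp, pow_add, hρc]; ring
        _ ≤ ρ ^ max (k + 1) (kbar + B + 1) * V₀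
              + (1 - 1 / l) * b (k + 1) * η + b (k + 1) / l * η := by gcongr
        _ = _ := by ring
  refine ⟨fun m hm₁ hm₂ => ?_, fun k hk => ?_⟩
  · have := main (kbar + m) (by omega)
    rwa [max_eq_right (by omega)] at this
  · have := main k (by omega)
    rwa [max_eq_left hk] at this
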